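/- arXiv:1907.06107 — 5 statements merged into one kernel-verified Lean document; each statement's English description precedes it below -/
import Mathlib

section
/- Let k be a field of characteristic zero and n ≥ 1. The k-linear subspace V = {C ∈ M_n(k) : Tr C = 0} of the matrix algebra M_n(k) is a left Mathieu–Zhao space of M_n(k). -/
/-- `V` is a left Mathieu–Zhao space of `A`: for every `a` in the radical of `V`
(i.e. `a ^ m ∈ V` for all sufficiently large `m`) and every `b ∈ A`, there is `N ≥ 1`
such that `b * a ^ m ∈ V` for all `m ≥ N`. -/
def IsLeftMZ {A : Type*} [Ring A] (V : Set A) : Prop :=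
  ∀ a : A, (∃ N : ℕ, 1 ≤ N ∧ ∀ m : ℕ, N ≤ m → a ^ m ∈ V) →
    ∀ b : A, ∃ N : ℕ, 1 ≤ N ∧ ∀ m : ℕ, N ≤ m → b * a ^ m ∈ V

theorem trace_idem_aux {k : Type*} [Field k] [CharZero k] (n : ℕ)
    (e : Matrix (Fin n) (Fin n) k) (he : e * e = e) (ht : Matrix.trace e = 0) : e = 0 := by
  have hi : IsIdempotentElem (Matrix.toLin' e) := by
    unfold IsIdempotentElem
    rw [Module.End.mul_eq_comp, ← Matrix.toLin'_mul, he]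
  have h1 := (LinearMap.isProj_range_iff_isIdempotentElem _).2 hi |>.trace
  rw [Matrix.trace_toLin'_eq, ht] at h1
  have h2 : LinearMap.range (Matrix.toLin' e) = ⊥ := by
    apply Submodule.finrank_eq_zero.1
    exact_mod_cast h1.symm
  exact Matrix.toLin'.map_eq_zero_iff.1 (LinearMap.range_eq_bot.1 h2)

open Polynomial in
/-- The trace-zero matrices form a left Mathieu–Zhao space of `M_n(k)`. -/
theorem stmt_3 {k : Type*} [Field k] [CharZero k] (n : ℕ) (hn : 1 ≤ n) :
    IsLeftMZ {C : Matrix (Fin n) (Fin n) k | Matrix.trace C = 0} := by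
  rintro a ⟨N, hN, h⟩ b
  simp only [Set.mem_setOf_eq] at h ⊢
  obtain ⟨q, hq, hnd⟩ := Polynomial.exists_eq_pow_rootMultiplicity_mul_and_not_dvd a.charpoly
    a.charpoly_monic.ne_zero 0
  rw [C_0, sub_zero] at hq hnd
  set r := rootMultiplicity 0 a.charpoly
  have hcop : IsCoprime ((X : k[X]) ^ (N + r)) q :=
    ((Polynomial.irreducible_X.coprime_iff_not_dvd).2 hnd).pow_left
  obtain ⟨u, v, huv⟩ := hcop
  have hch : aeval a (X ^ r * q) = 0 := by rw [← hq]; exact Matrix.aeval_self_charpoly a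
  have htr : ∀ p : k[X], Matrix.trace (aeval a (p * X ^ (N + r))) = 0 := by
    intro p
    induction p using Polynomial.induction_on' with
    | add p q hp hq => rw [add_mul, map_add, Matrix.trace_add, hp, hq, add_zero]
    | monomial m c =>
      rw [← C_mul_X_pow_eq_monomial, mul_assoc, ← pow_add, ← smul_eq_C_mul, map_smul,
        Matrix.trace_smul, map_pow, aeval_X, h _ (by omega), smul_zero]
  have hz : aeval a (u * X ^ (N + r)) = 0 := by
    apply trace_idem_aux n _ _ (htr u)
    rw [← map_mul, ← sub_eq_zero, ← map_sub]
    have : u * X ^ (N + r) * (u * X ^ (N + r)) - u * X ^ (N + r)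
        = (X ^ r * q) * (- (u * v * X ^ N)) := by
      linear_combination (u * X ^ (N + r)) * huv
    rw [this, map_mul, hch, zero_mul]
  have hnil : a ^ (N + r) = 0 := by
    have : (X : k[X]) ^ (N + r) = (u * X ^ (N + r)) * X ^ (N + r) + (X ^ r * q) * (v * X ^ N) := by
      linear_combination (-X ^ (N + r)) * huv
    have h2 := congrArg (aeval a) this
    rw [map_add, map_mul _ (u * _), map_mul _ (X ^ r * q), hz, hch, zero_mul, zero_mul, add_zero,
      map_pow, aeval_X] at h2
    exact h2
  refine ⟨N + r, by omega, fun m hm => ?_⟩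
  rw [pow_eq_zero_of_le hm hnil, mul_zero, Matrix.trace_zero]
end

section
/- Let V = {f ∈ ℂ[t] : ∫₀¹ f(t) dt = 0}. Then r(V) = 0, i.e. if f ∈ ℂ[t] satisfies ∫₀¹ f(t)^m dt = 0 for all sufficiently large m, then f = 0. In particular V is a Mathieu–Zhao space of ℂ[t]. -/
open MeasureTheory intervalIntegral

/-- `V` is a Mathieu–Zhao space of the commutative ring `A`: for every `a` in the radical
of `V` (i.e. `a ^ m ∈ V` for all sufficiently large `m`) and every `b ∈ A`, there is `N ≥ 1`
such that `b * a ^ m ∈ V` for all `m ≥ N`. -/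
def IsMZ {A : Type*} [CommRing A] (V : Set A) : Prop :=
  ∀ a : A, (∃ N : ℕ, 1 ≤ N ∧ ∀ m : ℕ, N ≤ m → a ^ m ∈ V) →
    ∀ b : A, ∃ N : ℕ, 1 ≤ N ∧ ∀ m : ℕ, N ≤ m → b * a ^ m ∈ V

namespace MZProof
open Polynomial

lemma coeff_pow_int {K : Type*} [Field K] (h : K[X]) (hi : ∀ i, IsIntegral ℤ (h.coeff i)) (m : ℕ) :
    ∀ i, IsIntegral ℤ ((h ^ m).coeff i) := by
  induction m with
  | zero =>
    intro i
    rw [pow_zero, coeff_one]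
    split_ifs
    · exact isIntegral_one
    · exact isIntegral_zero
  | succ m ih =>
    intro i
    rw [pow_succ, coeff_mul]
    exact IsIntegral.sum _ fun x _ => (ih _).mul (hi _)

lemma int_common {K : Type*} [Field K] [CharZero K] [Algebra ℚ K] [Algebra.IsAlgebraic ℚ K] (g : K[X]) (n : ℕ) :
    ∃ D : ℤ, D ≠ 0 ∧ ∀ i < n, IsIntegral ℤ ((D : K) * g.coeff i) := by
  induction n with
  | zero => exact ⟨1, one_ne_zero, by simp⟩
  | succ n ih =>
    obtain ⟨D, hD, h⟩ := ih
    have ha : IsAlgebraic ℤ (g.coeff n) :=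
      (IsFractionRing.isAlgebraic_iff ℤ ℚ K).2 (Algebra.IsAlgebraic.isAlgebraic _)
    obtain ⟨E, hE, hE'⟩ := ha.exists_integral_multiple
    refine ⟨D * E, mul_ne_zero hD hE, fun i hi => ?_⟩
    push_cast
    rcases Nat.lt_succ_iff_lt_or_eq.1 hi with hi | rfl
    · rw [mul_comm (D:K), mul_assoc]
      exact (isIntegral_algebraMap (R := ℤ) (x := E)).mul (h i hi)
    · rw [mul_assoc, ← zsmul_eq_mul (g.coeff i)]
      exact (isIntegral_algebraMap (R := ℤ) (x := D)).mul hE'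

lemma core {K : Type*} [Field K] [CharZero K] [Algebra ℚ K] [Algebra.IsAlgebraic ℚ K] (g : K[X])
    (hg : g.Monic) (d : ℕ) (hd : g.natDegree = d) (hd0 : d ≠ 0) (N : ℕ)
    (H : ∀ m, N ≤ m → ∑ j ∈ Finset.range (m * d + 1), ((j : K) + 1)⁻¹ * (g ^ m).coeff j = 0) : False := by
  obtain ⟨D, hD, hDi⟩ := int_common g (d + 1)
  set h : K[X] := C (D : K) * g with hh
  have hi : ∀ i, IsIntegral ℤ (h.coeff i) := by
    intro i
    rw [hh, coeff_C_mul]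
    by_cases hi : i < d + 1
    · exact hDi i hi
    · rw [coeff_eq_zero_of_natDegree_lt (by omega), mul_zero]
      exact isIntegral_zero
  obtain ⟨p, hp, hpn, hmod⟩ := Nat.exists_prime_gt_modEq_one (N * d + 1 + D.natAbs) hd0
  obtain ⟨m, hm⟩ := (Nat.modEq_iff_dvd' hp.one_le).1 hmod.symm
  have hpm : p = m * d + 1 := by
    have := hp.one_le
    rw [mul_comm m]
    omega
  have hNm : N ≤ m := by
    have : N * d ≤ m * d := by omega
    exact Nat.le_of_mul_le_mul_right this (Nat.pos_of_ne_zero hd0)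
  have e := H m hNm
  have hpow : ∀ j, (h ^ m).coeff j = (D : K) ^ m * (g ^ m).coeff j := by
    intro j
    rw [hh, mul_pow, ← C_pow, coeff_C_mul]
  have htop : (g ^ m).coeff (m * d) = 1 := by
    have := (hg.pow m).coeff_natDegree
    rwa [hg.natDegree_pow, hd] at this
  set y : K := ∑ j ∈ Finset.range (m * d), (((m * d).factorial / (j + 1) : ℕ) : K) * (h ^ m).coeff j with hy
  have hyi : IsIntegral ℤ y := by
    refine IsIntegral.sum _ fun j _ => IsIntegral.mul ?_ (coeff_pow_int h hi m j)
    exact_mod_cast isIntegral_algebraMap (R := ℤ) (A := K) (x := (((m * d).factorial / (j + 1) : ℕ) : ℤ))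
  have hy2 : (p : K) * y = - ((m * d).factorial : K) * (D : K) ^ m := by
    rw [Finset.sum_range_succ, htop] at e
    have hp0 : ((m * d : ℕ) : K) + 1 ≠ 0 := Nat.cast_add_one_ne_zero _
    have hy3 : y = ((m * d).factorial : K) * (D : K) ^ m * ∑ j ∈ Finset.range (m * d), ((j : K) + 1)⁻¹ * (g ^ m).coeff j := by
      rw [hy, Finset.mul_sum]
      refine Finset.sum_congr rfl fun j hj => ?_
      have hj := Finset.mem_range.1 hj
      rw [Nat.cast_div (Nat.dvd_factorial (Nat.succ_pos j) hj) (Nat.cast_ne_zero.2 (Nat.succ_ne_zero j)), hpow]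
      push_cast
      ring
    rw [hy3, eq_neg_of_add_eq_zero_left e, hpm]
    push_cast at hp0 ⊢
    field_simp
  -- y is rational, hence an integer
  have hpK : (p : K) ≠ 0 := by exact_mod_cast hp.ne_zero
  set q : ℚ := (- ((m * d).factorial : ℚ) * (D : ℚ) ^ m) / p with hq
  have hyq : y = algebraMap ℚ K q := by
    rw [hq]
    simp only [map_div₀, map_mul, map_neg, map_natCast, map_pow, map_intCast]
    rw [← hy2]
    field_simp
  rw [hyq] at hyi
  have hqi : IsIntegral ℤ q := (isIntegral_algebraMap_iff (algebraMap ℚ K).injective).1 hyi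
  obtain ⟨z, hz⟩ := IsIntegrallyClosed.isIntegral_iff.1 hqi
  have hpQ : (p : ℚ) ≠ 0 := by exact_mod_cast hp.ne_zero
  have hz2 : (p : ℤ) * z = - ((m * d).factorial : ℤ) * D ^ m := by
    have : (p : ℚ) * (z : ℚ) = - ((m * d).factorial : ℚ) * (D : ℚ) ^ m := by
      have hz' : (z : ℚ) = q := by simpa using hz
      rw [hz', hq]
      field_simp
    exact_mod_cast this
  have hdvd : (p : ℤ) ∣ - ((m * d).factorial : ℤ) * D ^ m := ⟨z, hz2.symm⟩
  have hpp := Nat.prime_iff_prime_int.1 hp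
  rcases hpp.dvd_or_dvd hdvd with h1 | h1
  · rw [dvd_neg, Int.natCast_dvd_natCast, hp.dvd_factorial] at h1
    omega
  · have h2 := Int.natCast_dvd.1 (hpp.dvd_of_dvd_pow h1)
    have := Nat.le_of_dvd (Int.natAbs_pos.2 hD) h2
    omega

lemma integral_eq (f : ℂ[X]) (n : ℕ) (hn : f.natDegree < n) :
    (∫ t in (0:ℝ)..1, Polynomial.eval (t : ℂ) f) =
      ∑ j ∈ Finset.range n, ((j : ℂ) + 1)⁻¹ * f.coeff j := by
  simp_rw [eval_eq_sum_range' hn]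
  rw [intervalIntegral.integral_finsetSum]
  · refine Finset.sum_congr rfl fun j _ => ?_
    rw [intervalIntegral.integral_const_mul]
    have : (∫ t in (0:ℝ)..1, (t : ℂ) ^ j) = ((∫ t in (0:ℝ)..1, t ^ j : ℝ) : ℂ) := by
      rw [← intervalIntegral.integral_ofReal]
      simp
    rw [this, integral_pow]
    push_cast
    simp [mul_comm]
  · intro j _
    apply Continuous.intervalIntegrable
    fun_prop

lemma exists_field (F : Type) (A : Type) [Field F] [CommRing A] [Nontrivial A] [Algebra F A]
    [Algebra.FiniteType F A] : ∃ (K : Type) (_ : Field K) (_ : Algebra F K)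
      (_ : Algebra.IsAlgebraic F K), Nonempty (A →ₐ[F] K) := by
  obtain ⟨M, hM⟩ := Ideal.exists_maximal A
  let _ : Field (A ⧸ M) := Ideal.Quotient.field M
  have : Module.Finite F (A ⧸ M) := finite_of_finite_type_of_isJacobsonRing F (A ⧸ M)
  exact ⟨A ⧸ M, inferInstance, inferInstance, inferInstance, ⟨Ideal.Quotient.mkₐ F M⟩⟩

lemma monic_case (g : ℂ[X]) (hg : g.Monic) (hd0 : g.natDegree ≠ 0) (N : ℕ)
    (H : ∀ m, N ≤ m → ∑ j ∈ Finset.range (m * g.natDegree + 1), ((j : ℂ) + 1)⁻¹ * (g ^ m).coeff j = 0) :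
    False := by
  classical
  let A := Algebra.adjoin ℚ (g.coeffs : Set ℂ)
  have : Algebra.FiniteType ℚ A :=
    (Subalgebra.fg_iff_finiteType _).1 (Subalgebra.fg_adjoin_finset _)
  have hl : g ∈ Polynomial.lifts (algebraMap A ℂ) := by
    rw [Polynomial.lifts_iff_coeff_lifts]
    intro i
    by_cases hi : g.coeff i = 0
    · exact ⟨0, by simp [hi]⟩
    · exact ⟨⟨g.coeff i, Algebra.subset_adjoin (coeff_mem_coeffs hi)⟩, rfl⟩
  obtain ⟨a, ha, had, ham⟩ := Polynomial.lifts_and_natDegree_eq_and_monic hl hg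
  obtain ⟨K, _, _, _, ⟨φ⟩⟩ := exists_field ℚ A
  have : CharZero K := charZero_of_injective_algebraMap (algebraMap ℚ K).injective
  have hA : ∀ m, N ≤ m → ∑ j ∈ Finset.range (m * g.natDegree + 1),
      algebraMap ℚ A (((j : ℚ) + 1)⁻¹) * (a ^ m).coeff j = 0 := by
    intro m hm
    have hinj : Function.Injective (algebraMap A ℂ) := Subtype.val_injective
    apply hinj
    rw [map_zero, ← H m hm, map_sum]
    refine Finset.sum_congr rfl fun j _ => ?_
    rw [map_mul, ← IsScalarTower.algebraMap_apply, ← coeff_map, Polynomial.map_pow, ha]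
    simp
  refine core (a.map (φ : A →+* K)) (ham.map _) g.natDegree ?_ hd0 N ?_
  · rw [ham.natDegree_map, had]
  · intro m hm
    have := congrArg φ (hA m hm)
    rw [map_zero, map_sum] at this
    rw [← this]
    refine Finset.sum_congr rfl fun j _ => ?_
    rw [map_mul, AlgHom.commutes, ← Polynomial.map_pow, coeff_map]
    simp

lemma main1 (f : ℂ[X]) (N : ℕ) (H : ∀ m : ℕ, N ≤ m →
        (∫ t in (0:ℝ)..1, Polynomial.eval (t : ℂ) (f ^ m)) = 0) : f = 0 := by
  by_contra hf
  have hl : f.leadingCoeff ≠ 0 := leadingCoeff_ne_zero.2 hf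
  by_cases hd : f.natDegree = 0
  · rw [eq_C_of_natDegree_eq_zero hd] at H hf
    have := H N le_rfl
    simp only [← C_pow, eval_C] at this
    simp at this
    exact hf (by simp [this.1])
  · have hdeg : (f * C f.leadingCoeff⁻¹).natDegree = f.natDegree :=
      natDegree_mul_leadingCoeff_inv f hf
    refine monic_case (f * C f.leadingCoeff⁻¹) (monic_mul_leadingCoeff_inv hf) (by rwa [hdeg]) N ?_
    intro m hm
    have e := H m hm
    rw [integral_eq _ (m * f.natDegree + 1) (by rw [natDegree_pow]; omega)] at e
    rw [hdeg]
    simp_rw [mul_pow, ← C_pow, coeff_mul_C, ← mul_assoc]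
    rw [← Finset.sum_mul, e, zero_mul]

end MZProof

/-- The subspace `V = {f ∈ ℂ[t] : ∫₀¹ f(t) dt = 0}` has radical `r(V) = 0`;
in particular `V` is a Mathieu–Zhao space of `ℂ[t]`. -/
theorem stmt_5 :
    (∀ f : Polynomial ℂ,
      (∃ N : ℕ, 1 ≤ N ∧ ∀ m : ℕ, N ≤ m →
        (∫ t in (0:ℝ)..1, Polynomial.eval (t : ℂ) (f ^ m)) = 0) → f = 0) ∧
    IsMZ {f : Polynomial ℂ | (∫ t in (0:ℝ)..1, Polynomial.eval (t : ℂ) f) = 0} := by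
  
  have key : ∀ f : Polynomial ℂ,
      (∃ N : ℕ, 1 ≤ N ∧ ∀ m : ℕ, N ≤ m →
        (∫ t in (0:ℝ)..1, Polynomial.eval (t : ℂ) (f ^ m)) = 0) → f = 0 := by
    rintro f ⟨N, _, H⟩
    exact MZProof.main1 f N H
  refine ⟨key, fun a ha b => ⟨1, le_rfl, fun m hm => ?_⟩⟩
  have h0 : a = 0 := key a ha
  have hm0 : m ≠ 0 := by omega
  simp [h0, hm0]
end

section
/- Main theorem (part ii): Let k be an algebraically closed field of characteristic zero, Λ a nonempty finite subset of k, f = ∏_{λ∈Λ}(t−λ)^{m(λ)} with all m(λ) ≥ 1, and V = ker 𝓛 where 𝓛 = (L_1,…,L_d) : k[t] → k^d, each L_i = S_0 ∘ P_0^{(i)}(∂) + Σ_{λ∈Λ, λ≠0} S_λ ∘ P_λ^{(i)}(D) with P_λ^{(i)} ∈ k[T] of degree < m(λ) (P_0 term omitted if 0 ∉ Λ), and for every λ ∈ Λ the maximum over i of the degrees of P_λ^{(i)} equals m(λ)−1. Then V is a Mathieu–Zhao space of k[t] if and only if for every nonempty subset Λ' ⊆ Λ there exists an index i with Σ_{λ∈Λ'}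 P_λ^{(i)}(0) ≠ 0. -/
open Polynomial

/-- The operator `D = t·d/dt` on `k[t]`. -/
noncomputable def Dop {k : Type*} [Field k] : Polynomial k → Polynomial k :=
  fun g => X * derivative g

/-- The operator `∂ = d/dt` on `k[t]`. -/
noncomputable def delOp {k : Type*} [Field k] : Polynomial k → Polynomial k :=
  fun g => derivative g

/-- For `P(T) = Σ cᵢ Tⁱ` and an operator `T` on `k[t]`, `opEval P T g = Σ cᵢ Tⁱ(g)`,
i.e. the operator `P(T)` applied to `g`. -/
noncomputable def opEval {k : Type*} [Field k] (P : Polynomial k)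
    (T : Polynomial k → Polynomial k) (g : Polynomial k) : Polynomial k :=
  ∑ i ∈ Finset.range (P.natDegree + 1), P.coeff i • T^[i] g

open scoped Classical

section Helpers

variable {k : Type*} [Field k]

lemma hlp_T (l : k) : ∃ w : k[X], eval l w ≠ 0 ∧
    ∀ g, (if l = 0 then delOp else Dop) g = w * derivative g := by
  by_cases h : l = 0
  · exact ⟨1, by simp, fun g => by simp [h, delOp]⟩
  · exact ⟨X, by simpa using h, fun g => by simp [h, Dop]⟩

lemma hlp_iter [CharZero k] (l : k) (T : k[X] → k[X]) (w : k[X]) (hw : eval l w ≠ 0)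
    (hT : ∀ g, T g = w * derivative g) (r : ℕ) : ∀ (j : ℕ) (h : k[X]),
    ∃ h', T^[j] ((X - C l) ^ (j + r) * h) = (X - C l) ^ r * h' ∧
      (eval l h ≠ 0 → eval l h' ≠ 0) := by
  intro j
  induction j with
  | zero => intro h; exact ⟨h, by simp, id⟩
  | succ j ih =>
    intro h
    obtain ⟨h', h1, h2⟩ := ih (w * (((j + r + 1 : ℕ) : k[X]) * h + (X - C l) * derivative h))
    refine ⟨h', ?_, fun hh => h2 ?_⟩
    · rw [Function.iterate_succ_apply, ← h1, hT]
      congr 1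
      have : j + 1 + r = j + r + 1 := by ring
      rw [this, derivative_mul, derivative_X_sub_C_pow]
      simp
      ring
    · have : ((j + r + 1 : ℕ) : k) ≠ 0 := Nat.cast_ne_zero.mpr (by omega)
      simp only [eval_mul, eval_add, eval_natCast, eval_sub, eval_X, eval_C, sub_self, zero_mul,
        add_zero]
      exact mul_ne_zero hw (mul_ne_zero this hh)

lemma hlp_lin (l : k) (Q : k[X]) : ∃ φ : k[X] →ₗ[k] k, ∀ g,
    φ g = eval l (opEval Q (if l = 0 then delOp else Dop) g) := by
  obtain ⟨w, hw, hT⟩ := hlp_T l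
  let T : k[X] →ₗ[k] k[X] := (LinearMap.mulLeft k w).comp derivative
  have hTT : (if l = 0 then delOp else Dop) = (T : k[X] → k[X]) := by
    funext g; rw [hT]; rfl
  refine ⟨∑ i ∈ Finset.range (Q.natDegree + 1), Q.coeff i • (leval l).comp (T ^ i), fun g => ?_⟩
  rw [hTT, opEval, eval_finsetSum]
  simp [Module.End.pow_apply]

lemma hlp_kill [CharZero k] (l : k) (Q : k[X]) (M : ℕ) (hM : 1 ≤ M) (hQ : Q.degree < (M : WithBot ℕ))
    (g : k[X]) (hg : (X - C l) ^ M ∣ g) :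
    eval l (opEval Q (if l = 0 then delOp else Dop) g) = 0 := by
  obtain ⟨w, hw, hT⟩ := hlp_T l
  obtain ⟨h, rfl⟩ := hg
  have hn : Q.natDegree < M := by
    rcases eq_or_ne Q 0 with rfl | h0
    · simp only [natDegree_zero]; omega
    · exact (natDegree_lt_iff_degree_lt h0).mpr hQ
  rw [opEval, eval_finsetSum]
  refine Finset.sum_eq_zero fun i hi => ?_
  rw [Finset.mem_range] at hi
  obtain ⟨h', h1, -⟩ := hlp_iter l _ w hw hT (M - i) i h
  rw [show i + (M - i) = M by omega] at h1
  rw [h1]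
  have : M - i ≠ 0 := by omega
  simp [this]

lemma hlp_top [CharZero k] (l : k) (Q : k[X]) (M : ℕ) (hQ : Q.degree = (M : WithBot ℕ)) :
    eval l (opEval Q (if l = 0 then delOp else Dop) ((X - C l) ^ M)) ≠ 0 := by
  obtain ⟨w, hw, hT⟩ := hlp_T l
  have hn : Q.natDegree = M := natDegree_eq_of_degree_eq_some hQ
  have hc : Q.coeff M ≠ 0 := coeff_ne_zero_of_eq_degree hQ
  rw [opEval, eval_finsetSum, hn, Finset.sum_range_succ, Finset.sum_eq_zero, zero_add]
  · obtain ⟨h', h1, h2⟩ := hlp_iter l _ w hw hT 0 M 1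
    rw [add_zero, mul_one] at h1
    rw [h1]
    simpa using ⟨hc, h2 (by simp)⟩
  · intro i hi
    rw [Finset.mem_range] at hi
    obtain ⟨h', h1, -⟩ := hlp_iter l _ w hw hT (M - i) i 1
    rw [show i + (M - i) = M by omega, mul_one] at h1
    rw [h1]
    have : M - i ≠ 0 := by omega
    simp [this]

lemma hlp_one (l : k) (Q : k[X]) :
    eval l (opEval Q (if l = 0 then delOp else Dop) 1) = eval 0 Q := by
  obtain ⟨w, hw, hT⟩ := hlp_T l
  have h0 : ∀ j, (if l = 0 then delOp else Dop)^[j] (0 : k[X]) = 0 := by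
    intro j
    induction j with
    | zero => rfl
    | succ j ih => rw [Function.iterate_succ_apply, hT]; simpa using ih
  rw [opEval, eval_finsetSum, Finset.sum_range_succ', Finset.sum_eq_zero]
  · simp [coeff_zero_eq_eval_zero]
  · intro i _
    rw [Function.iterate_succ_apply, hT]
    simp [h0]

lemma hlp_crt (Λ Λ' : Finset k) (m : k → ℕ) : ∃ e : k[X],
    (∀ l ∈ Λ, l ∈ Λ' → (X - C l) ^ m l ∣ e - 1) ∧
    (∀ l ∈ Λ, l ∉ Λ' → (X - C l) ^ m l ∣ e) := by
  classical
  have hc : IsCoprime (∏ l ∈ Λ', (X - C l) ^ m l) (∏ l ∈ Λ \ Λ', (X - C l) ^ m l) := by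
    refine IsCoprime.prod_left fun i hi => IsCoprime.prod_right fun j hj => IsCoprime.pow ?_
    refine isCoprime_X_sub_C_of_isUnit_sub ?_
    rw [isUnit_iff_ne_zero, sub_ne_zero]
    rintro rfl
    exact (Finset.mem_sdiff.mp hj).2 hi
  obtain ⟨u, v, huv⟩ := hc
  refine ⟨v * ∏ l ∈ Λ \ Λ', (X - C l) ^ m l, fun l _ hl' => ?_, fun l hl hl' => ?_⟩
  · have : v * ∏ l ∈ Λ \ Λ', (X - C l) ^ m l - 1 = -u * ∏ l ∈ Λ', (X - C l) ^ m l := by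
      rw [← huv]; ring
    rw [this]
    exact Dvd.dvd.mul_left (Finset.dvd_prod_of_mem (fun l => (X - C l) ^ m l) hl') _
  · exact Dvd.dvd.mul_left (Finset.dvd_prod_of_mem (fun l => (X - C l) ^ m l)
      (Finset.mem_sdiff.mpr ⟨hl, hl'⟩)) _

lemma hlp_abs (Λ : Finset k) (m : k → ℕ) (d : ℕ) (c : Fin d → k → k)
    (φ : Fin d → k → k[X] →ₗ[k] k)
    (hkill : ∀ i, ∀ l ∈ Λ, ∀ g, (X - C l) ^ m l ∣ g → φ i l g = 0)
    (hone : ∀ i, ∀ l ∈ Λ, φ i l 1 = c i l)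
    (htop : ∀ l ∈ Λ, ∃ i, φ i l ((X - C l) ^ (m l - 1)) ≠ 0) :
    IsMZ {g : k[X] | ∀ i : Fin d, ∑ l ∈ Λ, φ i l g = 0} ↔
      ∀ Λ' ⊆ Λ, Λ'.Nonempty → ∃ i : Fin d, ∑ l ∈ Λ', c i l ≠ 0 := by
  classical
  have hcong : ∀ i, ∀ l ∈ Λ, ∀ g h, (X - C l) ^ m l ∣ g - h → φ i l g = φ i l h := by
    intro i l hl g h hgh
    have := hkill i l hl _ hgh
    rwa [map_sub, sub_eq_zero] at this
  -- value on an idempotent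
  have hid : ∀ (Λ' : Finset k), Λ' ⊆ Λ → ∀ e : k[X],
      (∀ l ∈ Λ, l ∈ Λ' → (X - C l) ^ m l ∣ e - 1) →
      (∀ l ∈ Λ, l ∉ Λ' → (X - C l) ^ m l ∣ e) → ∀ i, ∑ l ∈ Λ, φ i l e = ∑ l ∈ Λ', c i l := by
    intro Λ' hΛ' e h1 h2 i
    rw [← Finset.sum_subset hΛ' (f := fun l => φ i l e)
      (fun l hl hl' => hkill i l hl _ (h2 l hl hl'))]
    refine Finset.sum_congr rfl fun l hl => ?_
    rw [hcong i l (hΛ' hl) _ _ (h1 l (hΛ' hl) hl), hone i l (hΛ' hl)]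
  constructor
  · intro hMZ Λ' hΛ' hne
    by_contra hcon
    push Not at hcon
    obtain ⟨l0, hl0⟩ := hne
    obtain ⟨a, ha1, ha2⟩ := hlp_crt Λ Λ' m
    obtain ⟨e, he1, he2⟩ := hlp_crt Λ {l0} m
    have hp1 : ∀ n, ∀ l ∈ Λ, l ∈ Λ' → (X - C l) ^ m l ∣ a ^ n - 1 := fun n l hl hl' =>
      (ha1 l hl hl').trans (by simpa using sub_dvd_pow_sub_pow a 1 n)
    obtain ⟨N, hN1, hN⟩ := hMZ a ⟨1, le_rfl, fun n hn i => by
      rw [hid Λ' hΛ' (a ^ n) (hp1 n) (fun l hl hl' => (ha2 l hl hl').trans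
        (dvd_pow_self a (by omega))), hcon]⟩ ((X - C l0) ^ (m l0 - 1) * e)
    obtain ⟨i, hi⟩ := htop l0 (hΛ' hl0)
    have := hN N le_rfl i
    rw [Finset.sum_eq_single l0] at this
    · apply hi
      rw [← this]
      refine (hcong i l0 (hΛ' hl0) _ _ ?_).symm
      have h3 : (X - C l0) ^ (m l0 - 1) * e * a ^ N - (X - C l0) ^ (m l0 - 1)
        = (X - C l0) ^ (m l0 - 1) * (e - 1) * a ^ N + (X - C l0) ^ (m l0 - 1) * (a ^ N - 1) := by
        ring
      rw [h3]
      exact dvd_add (((he1 l0 (hΛ' hl0) (by simp)).mul_left _).mul_right _)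
        ((hp1 N l0 (hΛ' hl0) hl0).mul_left _)
    · intro l hl hne
      exact hkill i l hl _ (((he2 l hl (by simpa using hne)).mul_left _).mul_right _)
    · intro h; exact absurd (hΛ' hl0) h
  · intro H a ⟨N, hN1, hN⟩ b
    have hdv : ∀ l, ∀ μ, eval l a = μ → (X - C l) ∣ a - C μ := by
      intro l μ h
      rw [dvd_iff_isRoot]; simp [h]
    have hle : ∀ l ∈ Λ, m l ≤ ∑ l ∈ Λ, m l := fun l hl =>
      Finset.single_le_sum (f := m) (fun _ _ => Nat.zero_le _) hl
    set M := ∑ l ∈ Λ, m l with hM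
    by_cases hz : ∀ l ∈ Λ, eval l a = 0
    · refine ⟨M + 1, by omega, fun n hn i => Finset.sum_eq_zero fun l hl => hkill i l hl _ ?_⟩
      refine Dvd.dvd.mul_left ?_ _
      have h1 : (X - C l) ∣ a := by simpa using hdv l 0 (hz l hl)
      exact (pow_dvd_pow_of_dvd h1 (m l)).trans (pow_dvd_pow a (by have := hle l hl; omega))
    · exfalso
      push Not at hz
      obtain ⟨l0, hl0, hμ⟩ := hz
      set μ := eval l0 a with hμd
      have hcop : ∀ ν, ν ≠ μ → IsCoprime (X - C μ : k[X]) (X - C ν) := fun ν hν => by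
        refine isCoprime_X_sub_C_of_isUnit_sub ?_
        rw [isUnit_iff_ne_zero, sub_ne_zero]
        exact hν.symm
      have hc : IsCoprime ((X - C μ : k[X]) ^ M)
          (X ^ N * ∏ ν ∈ (Λ.image (fun l => eval l a)).erase μ, (X - C ν) ^ M) := by
        refine IsCoprime.mul_right ?_ (IsCoprime.prod_right fun ν hν =>
          IsCoprime.pow (hcop ν (Finset.ne_of_mem_erase hν)))
        have := IsCoprime.pow (m := M) (n := N) (hcop 0 hμ.symm)
        simpa using this
      obtain ⟨u, v, huv⟩ := hc
      set R := ∏ ν ∈ (Λ.image (fun l => eval l a)).erase μ, (X - C ν : k[X]) ^ M with hR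
      obtain ⟨i, hi⟩ := H (Λ.filter (fun l => eval l a = μ)) (Finset.filter_subset _ _)
        ⟨l0, by simp [hl0, hμd]⟩
      apply hi
      have hmem : ∀ r : k[X], ∑ l ∈ Λ, φ i l (a ^ N * r.comp a) = 0 := by
        intro r
        induction r using Polynomial.induction_on' with
        | add p q hp hq => simp [mul_add, Finset.sum_add_distrib, hp, hq]
        | monomial n x =>
          have h1 : a ^ N * (monomial n x).comp a = x • a ^ (N + n) := by
            rw [monomial_comp, smul_eq_C_mul]; ring
          simp only [h1, map_smul, ← Finset.smul_sum]
          rw [hN (N + n) (by omega) i, smul_zero]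
      rw [← hid _ (Finset.filter_subset _ _) (a ^ N * (v * R).comp a) ?_ ?_ i, hmem]
      · intro l hl hl'
        have h1 : eval l a = μ := (Finset.mem_filter.mp hl').2
        have h2 : a ^ N * (v * R).comp a - 1 = - (u.comp a) * (a - C μ) ^ M := by
          have := congrArg (fun p => p.comp a) huv
          simp only [add_comp, mul_comp, pow_comp, sub_comp, X_comp, C_comp, one_comp] at this
          rw [← this, mul_comp]; ring
        rw [h2]
        exact Dvd.dvd.mul_left ((pow_dvd_pow _ (hle l hl)).trans
          (pow_dvd_pow_of_dvd (hdv l μ h1) M)) _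
      · intro l hl hl'
        have h1 : eval l a ≠ μ := fun h => hl' (Finset.mem_filter.mpr ⟨hl, h⟩)
        have h3 : (X - C (eval l a)) ^ M ∣ R := Finset.dvd_prod_of_mem
          (fun ν => (X - C ν : k[X]) ^ M)
          (Finset.mem_erase.mpr ⟨h1, Finset.mem_image_of_mem _ hl⟩)
        obtain ⟨R', hR'⟩ := h3
        rw [hR']
        simp only [mul_comp, pow_comp, sub_comp, X_comp, C_comp]
        refine Dvd.dvd.mul_left (Dvd.dvd.mul_left (Dvd.dvd.mul_right ?_ _) _) _
        exact (pow_dvd_pow _ (hle l hl)).trans (pow_dvd_pow_of_dvd (hdv l _ rfl) M)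

end Helpers

/-- Main theorem (part ii): with `V = ker 𝓛`, where
`L_i = S₀∘P₀⁽ⁱ⁾(∂) + Σ_{λ∈Λ, λ≠0} S_λ∘P_λ⁽ⁱ⁾(D)`, `deg P_λ⁽ⁱ⁾ < m(λ)` and, for every
`λ ∈ Λ`, the maximum over `i` of the degrees of the `P_λ⁽ⁱ⁾` equals `m(λ) - 1`, the
space `V` is a Mathieu–Zhao space of `k[t]` iff for every nonempty `Λ' ⊆ Λ` there is an
index `i` with `Σ_{λ∈Λ'} P_λ⁽ⁱ⁾(0) ≠ 0`. -/
theorem stmt_14 {k : Type*} [Field k] [IsAlgClosed k] [CharZero k]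
    (Λ : Finset k) (hΛ : Λ.Nonempty) (m : k → ℕ) (hm : ∀ l ∈ Λ, 1 ≤ m l)
    (f : Polynomial k) (hf : f = ∏ l ∈ Λ, (X - C l) ^ m l)
    (d : ℕ) (P : Fin d → k → Polynomial k)
    (hdeg : ∀ i : Fin d, ∀ l ∈ Λ, (P i l).degree < (m l : WithBot ℕ))
    (hmax : ∀ l ∈ Λ, ∃ i : Fin d, (P i l).degree = ((m l - 1 : ℕ) : WithBot ℕ)) :
    IsMZ {g : Polynomial k | ∀ i : Fin d,
        ∑ l ∈ Λ, eval l (opEval (P i l) (if l = 0 then delOp else Dop) g) = 0} ↔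
      ∀ Λ' ⊆ Λ, Λ'.Nonempty → ∃ i : Fin d, ∑ l ∈ Λ', (P i l).eval 0 ≠ 0 := by
  choose φ hφ using fun (i : Fin d) (l : k) => hlp_lin l (P i l)
  have key := hlp_abs Λ m d (fun i l => (P i l).eval 0) φ
    (fun i l hl g hg => by rw [hφ]; exact hlp_kill l _ _ (hm l hl) (hdeg i l hl) g hg)
    (fun i l hl => by rw [hφ]; exact hlp_one l _)
    (fun l hl => by
      obtain ⟨i, hi⟩ := hmax l hl
      exact ⟨i, by rw [hφ]; exact hlp_top l _ _ hi⟩)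
  simp only [hφ] at key
  convert key using 1
end

section
/- Crucial lemma: Let k be a field, A a commutative k-algebra, a_1,…,a_n ∈ A a regular sequence in A, and ImD = Σ_{i=1}^n (∂_{x_i} − a_i)·A[x_1,…,x_n]. Let b ∈ A[x_1,…,x_n] be a polynomial of total degree d and b_d its homogeneous component of degree d. If b ∈ ImD, then every coefficient of b_d belongs to the ideal I of A generated by a_1,…,a_n. -/
/-- `ImD = Σᵢ (∂_{xᵢ} - aᵢ)·A[x₁,…,xₙ]`. -/
def ImD {A : Type*} [CommRing A] {n : ℕ} (a : Fin n → A) :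
    Set (MvPolynomial (Fin n) A) :=
  {h | ∃ g : Fin n → MvPolynomial (Fin n) A,
    h = ∑ i, (MvPolynomial.pderiv i (g i) - MvPolynomial.C (a i) * g i)}

/-- `(a₁,…,aₙ)` is a regular sequence in `A`: each `aᵢ` is a non-zerodivisor modulo
`(a₁,…,a_{i-1})`, and the ideal generated by all `aᵢ` is proper. -/
def IsRegSeq {A : Type*} [CommRing A] {n : ℕ} (a : Fin n → A) : Prop :=
  (∀ i : Fin n, ∀ x : A,
      x * a i ∈ Ideal.span (a '' {j | j < i}) → x ∈ Ideal.span (a '' {j | j < i})) ∧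
    Ideal.span (Set.range a) ≠ ⊤

theorem koszul_aux {A : Type*} [CommRing A] : ∀ {n : ℕ} (a : Fin n → A)
    (_ : ∀ i : Fin n, ∀ x : A,
      x * a i ∈ Ideal.span (a '' {j | j < i}) → x ∈ Ideal.span (a '' {j | j < i}))
    (g : Fin n → A) (_ : ∑ i, a i * g i = 0),
    ∃ c : Fin n → Fin n → A, ∀ i, g i = ∑ j, a j * (c i j - c j i) := by
  intro n
  induction n with
  | zero => intro a _ g _; exact ⟨fun _ _ => 0, fun i => i.elim0⟩
  | succ n ih =>
    intro a ha g hg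
    have himg : ∀ i : Fin n, a '' {j | j < i.castSucc}
        = (fun j : Fin n => a j.castSucc) '' {j | j < i} := by
      intro i
      ext x
      constructor
      · rintro ⟨j, hj, rfl⟩
        have hj' : j < i.castSucc := hj
        refine ⟨⟨j.1, ?_⟩, ?_, rfl⟩
        · have : j.1 < i.1 := hj'
          omega
        · exact hj'
      · rintro ⟨j, hj, rfl⟩
        exact ⟨j.castSucc, hj, rfl⟩
    have hlast : a '' {j | j < Fin.last n} = Set.range (fun j : Fin n => a j.castSucc) := by
      ext x
      constructor
      · rintro ⟨j, hj, rfl⟩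
        exact ⟨⟨j.1, hj⟩, rfl⟩
      · rintro ⟨j, rfl⟩
        exact ⟨j.castSucc, Fin.castSucc_lt_last j, rfl⟩
    rw [Fin.sum_univ_castSucc] at hg
    have h1 : g (Fin.last n) ∈ Ideal.span (a '' {j | j < Fin.last n}) := by
      apply ha
      rw [hlast]
      have : g (Fin.last n) * a (Fin.last n)
          = ∑ i : Fin n, (- g i.castSucc) * a i.castSucc := by
        simp only [neg_mul, Finset.sum_neg_distrib]
        have e : ∑ i : Fin n, g i.castSucc * a i.castSucc
            = ∑ i : Fin n, a i.castSucc * g i.castSucc :=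
          Finset.sum_congr rfl fun _ _ => mul_comm _ _
        rw [e]
        linear_combination hg
      rw [this]
      exact Ideal.sum_mem _ fun i _ =>
        Ideal.mul_mem_left _ _ (Ideal.subset_span ⟨i, rfl⟩)
    rw [hlast] at h1
    obtain ⟨h, hh⟩ := (Submodule.mem_span_range_iff_exists_fun A).mp h1
    simp only [smul_eq_mul] at hh
    obtain ⟨c, hc⟩ := ih (fun j => a j.castSucc)
      (by
        intro i x hx
        rw [← himg] at hx ⊢
        exact ha _ _ hx)
      (fun i => g i.castSucc + h i * a (Fin.last n))
      (by
        rw [← hh, Finset.mul_sum, ← Finset.sum_add_distrib] at hg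
        rw [← hg]
        exact Finset.sum_congr rfl fun _ _ => by ring)
    refine ⟨Fin.lastCases (Fin.lastCases 0 h)
      (fun i => Fin.lastCases 0 (fun j => c i j)), ?_⟩
    intro i
    rw [Fin.sum_univ_castSucc]
    induction i using Fin.lastCases with
    | last =>
      simp only [Fin.lastCases_last, Fin.lastCases_castSucc, sub_zero, sub_self, mul_zero,
        add_zero]
      rw [← hh]
      exact Finset.sum_congr rfl fun _ _ => mul_comm _ _
    | cast i =>
      simp only [Fin.lastCases_last, Fin.lastCases_castSucc]
      have := hc i
      linear_combination this

/-- The operator `∂_{x_i} - a_i`. -/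
noncomputable def opD {A : Type*} [CommRing A] {n : ℕ} (a : Fin n → A) (i : Fin n)
    (p : MvPolynomial (Fin n) A) : MvPolynomial (Fin n) A :=
  MvPolynomial.pderiv i p - MvPolynomial.C (a i) * p

theorem opD_comm {A : Type*} [CommRing A] {n : ℕ} (a : Fin n → A) (i j : Fin n)
    (p : MvPolynomial (Fin n) A) : opD a i (opD a j p) = opD a j (opD a i p) := by
  have h : MvPolynomial.pderiv i (MvPolynomial.pderiv j p)
      = MvPolynomial.pderiv j (MvPolynomial.pderiv i p) := by
    by_cases hij : i = j
    · rw [hij]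
    ext m
    simp only [MvPolynomial.coeff_pderiv, Finsupp.add_apply, Finsupp.single_apply, hij,
      Ne.symm hij, if_false, add_zero]
    rw [add_right_comm]
    ring
  simp only [opD, map_sub, MvPolynomial.pderiv_C_mul, h]
  ring

theorem opD_sub {A : Type*} [CommRing A] {n : ℕ} (a : Fin n → A) (i : Fin n)
    (p q : MvPolynomial (Fin n) A) : opD a i (p - q) = opD a i p - opD a i q := by
  simp only [opD, map_sub]; ring

theorem opD_add {A : Type*} [CommRing A] {n : ℕ} (a : Fin n → A) (i : Fin n)
    (p q : MvPolynomial (Fin n) A) : opD a i (p + q) = opD a i p + opD a i q := by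
  simp only [opD, map_add]; ring

theorem opD_sum {A : Type*} [CommRing A] {n : ℕ} (a : Fin n → A) (i : Fin n)
    (p : Fin n → MvPolynomial (Fin n) A) : opD a i (∑ j, p j) = ∑ j, opD a i (p j) := by
  simp only [opD, map_sum, Finset.mul_sum, Finset.sum_sub_distrib]

theorem coeff_opD {A : Type*} [CommRing A] {n : ℕ} (a : Fin n → A) (i : Fin n)
    (p : MvPolynomial (Fin n) A) (N : ℕ)
    (hp : ∀ m : Fin n →₀ ℕ, N < m.degree → p.coeff m = 0)
    (m : Fin n →₀ ℕ) (hm : N ≤ m.degree) :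
    (opD a i p).coeff m = - (a i * p.coeff m) := by
  rw [opD, MvPolynomial.coeff_sub, MvPolynomial.coeff_pderiv, MvPolynomial.coeff_C_mul,
    hp (m + Finsupp.single i 1) (by simp; omega)]
  ring

theorem step_aux {A : Type*} [CommRing A] {n : ℕ} (a : Fin n → A) (ha : IsRegSeq a)
    (g : Fin n → MvPolynomial (Fin n) A) (N : ℕ)
    (hg : ∀ i, ∀ m : Fin n →₀ ℕ, N < m.degree → (g i).coeff m = 0)
    (hb : ∀ m : Fin n →₀ ℕ, N ≤ m.degree → (∑ i, opD a i (g i)).coeff m = 0) :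
    ∃ g' : Fin n → MvPolynomial (Fin n) A, ∑ i, opD a i (g' i) = ∑ i, opD a i (g i) ∧
      ∀ i, ∀ m : Fin n →₀ ℕ, N ≤ m.degree → (g' i).coeff m = 0 := by
  classical
  have hk : ∀ m : Fin n →₀ ℕ, ∃ c : Fin n → Fin n → A, N ≤ m.degree →
      ∀ i, (g i).coeff m = ∑ j, a j * (c i j - c j i) := by
    intro m
    by_cases hm : N ≤ m.degree
    · have h0 := hb m hm
      rw [MvPolynomial.coeff_sum,
        Finset.sum_congr rfl (fun i _ => coeff_opD a i (g i) N (hg i) m hm),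
        Finset.sum_neg_distrib, neg_eq_zero] at h0
      obtain ⟨c, hc⟩ := koszul_aux a ha.1 _ h0
      exact ⟨c, fun _ => hc⟩
    · exact ⟨fun _ _ => 0, fun h => absurd h hm⟩
  choose c hc using hk
  let S : Finset (Fin n →₀ ℕ) :=
    (Finset.univ.biUnion fun i => (g i).support).filter fun m => N ≤ m.degree
  let P : Fin n → Fin n → MvPolynomial (Fin n) A :=
    fun i j => ∑ m ∈ S, MvPolynomial.monomial m (c m i j)
  have hP : ∀ i j m, (P i j).coeff m = if m ∈ S then c m i j else 0 := by
    intro i j m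
    simp only [P, MvPolynomial.coeff_sum, MvPolynomial.coeff_monomial, Finset.sum_ite_eq']
  have hS : ∀ m, N < m.degree → m ∉ S := by
    intro m hm hmS
    simp only [S, Finset.mem_filter, Finset.mem_biUnion, MvPolynomial.mem_support_iff] at hmS
    obtain ⟨⟨i, _, hi⟩, _⟩ := hmS
    exact hi (hg i m hm)
  refine ⟨fun i => g i + ∑ j, opD a j (P i j - P j i), ?_, ?_⟩
  · simp only [opD_add, opD_sum, opD_sub, Finset.sum_add_distrib, Finset.sum_sub_distrib]
    have : ∑ i, ∑ j, opD a i (opD a j (P j i)) = ∑ i, ∑ j, opD a i (opD a j (P i j)) := by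
      rw [Finset.sum_comm]
      exact Finset.sum_congr rfl fun i _ => Finset.sum_congr rfl fun j _ => opD_comm _ _ _ _
    rw [this, sub_self, add_zero]
  · intro i m hm
    rw [MvPolynomial.coeff_add, MvPolynomial.coeff_sum,
      Finset.sum_congr rfl (fun j _ => coeff_opD a j (P i j - P j i) N
        (fun m hm => by rw [MvPolynomial.coeff_sub, hP, hP, if_neg (hS m hm),
          if_neg (hS m hm), sub_zero]) m hm)]
    simp only [MvPolynomial.coeff_sub, hP]
    by_cases hmS : m ∈ S
    · simp only [hmS, if_true]
      rw [Finset.sum_neg_distrib, ← hc m hm i, add_neg_cancel]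
    · simp only [hmS, if_false, sub_zero, mul_zero, neg_zero, Finset.sum_const_zero, add_zero]
      by_contra hne
      apply hmS
      simp only [S, Finset.mem_filter, Finset.mem_biUnion, MvPolynomial.mem_support_iff]
      exact ⟨⟨i, Finset.mem_univ _, hne⟩, hm⟩

theorem descend_aux {A : Type*} [CommRing A] {n : ℕ} (a : Fin n → A) (ha : IsRegSeq a)
    (b : MvPolynomial (Fin n) A) (d : ℕ)
    (hb : ∀ m : Fin n →₀ ℕ, d < m.degree → b.coeff m = 0) (e : ℕ) :
    ∀ (g : Fin n → MvPolynomial (Fin n) A), b = ∑ i, opD a i (g i) →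
    (∀ i, ∀ m : Fin n →₀ ℕ, d + e < m.degree → (g i).coeff m = 0) →
    ∃ g' : Fin n → MvPolynomial (Fin n) A, b = ∑ i, opD a i (g' i) ∧
      ∀ i, ∀ m : Fin n →₀ ℕ, d < m.degree → (g' i).coeff m = 0 := by
  induction e with
  | zero => intro g h1 h2; exact ⟨g, h1, h2⟩
  | succ e ih =>
    intro g h1 h2
    obtain ⟨g', h3, h4⟩ := step_aux a ha g (d + (e + 1)) h2
      (fun m hm => by rw [← h1]; exact hb m (by omega))
    exact ih g' (h1.trans h3.symm) fun i m hm => h4 i m (by omega)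

theorem coeff_zero_aux {A : Type*} [CommRing A] {n : ℕ} (p : MvPolynomial (Fin n) A)
    (m : Fin n →₀ ℕ) (h : p.totalDegree < m.degree) : p.coeff m = 0 :=
  MvPolynomial.coeff_eq_zero_of_totalDegree_lt h

/-- Crucial lemma: if `b ∈ ImD` has total degree `d`, then every coefficient of the
degree-`d` homogeneous component of `b` lies in the ideal generated by `a₁,…,aₙ`. -/
theorem stmt_16 {k A : Type*} [Field k] [CommRing A] [Algebra k A] {n : ℕ}
    (a : Fin n → A) (ha : IsRegSeq a)
    (b : MvPolynomial (Fin n) A) (d : ℕ) (hd : b.totalDegree = d)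
    (hb : b ∈ ImD a) :
    ∀ m : Fin n →₀ ℕ,
      (MvPolynomial.homogeneousComponent d b).coeff m ∈ Ideal.span (Set.range a) := by
  intro m
  rw [MvPolynomial.coeff_homogeneousComponent]
  split_ifs with hm
  · obtain ⟨g, hg⟩ := hb
    obtain ⟨g', h1, h2⟩ := descend_aux a ha b d
      (fun m hm => coeff_zero_aux b m (by omega))
      (∑ i, (g i).totalDegree) g hg
      (fun i m hm => coeff_zero_aux (g i) m (by
        have := Finset.single_le_sum (f := fun i => (g i).totalDegree)
          (fun i _ => Nat.zero_le _) (Finset.mem_univ i)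
        omega))
    rw [h1, MvPolynomial.coeff_sum]
    refine Ideal.sum_mem _ fun i _ => ?_
    rw [coeff_opD a i (g' i) d (h2 i) m hm.ge]
    exact neg_mem (Ideal.mul_mem_right _ _ (Ideal.subset_span ⟨i, rfl⟩))
  · exact zero_mem _
end

section
/- Let k be a field of characteristic p > 0, A a commutative k-algebra, a_1,…,a_n ∈ A a regular sequence in A, and ImD = Σ_{i=1}^n (∂_{x_i} − a_i)·A[x_1,…,x_n]. If f ∈ A[x_1,…,x_n] satisfies f^p ∈ ImD, then for every g ∈ A[x_1,…,x_n] and every m ≥ p² one has g·f^m ∈ ImD. -/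
/-- Weakly regular sequences. -/
def WkReg {A : Type*} [CommRing A] {n : ℕ} (a : Fin n → A) : Prop :=
  ∀ i : Fin n, ∀ x : A,
      x * a i ∈ Ideal.span (a '' {j | j < i}) → x ∈ Ideal.span (a '' {j | j < i})

/-- `b` is a non-zero-divisor modulo `I`. -/
def NZD {A : Type*} [CommRing A] (I : Ideal A) (b : A) : Prop := ∀ x, x * b ∈ I → x ∈ I

theorem NZD.pow {A : Type*} [CommRing A] {I : Ideal A} {b : A} (h : NZD I b) (e : ℕ) :
    NZD I (b ^ e) := by
  induction e with
  | zero => intro x hx; simpa using hx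
  | succ e ih =>
    intro x hx
    apply ih
    apply h
    rwa [mul_assoc, ← pow_succ]

theorem NZD.swap {A : Type*} [CommRing A] {S : Set A} {a b : A} (h : NZD (Ideal.span S) a)
    (hb : NZD (Ideal.span (insert a S)) b) : NZD (Ideal.span (insert b S)) a := by
  intro x hx
  obtain ⟨y, z, hz, hxy⟩ := Ideal.mem_span_insert.1 hx
  have h1 : y ∈ Ideal.span (insert a S) := by
    apply hb
    rw [Ideal.mem_span_insert]
    exact ⟨x, -z, neg_mem hz, by linear_combination -hxy⟩
  obtain ⟨w, v, hv, hyw⟩ := Ideal.mem_span_insert.1 h1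
  rw [Ideal.mem_span_insert]
  refine ⟨w, x - w * b, ?_, by ring⟩
  apply h
  have : (x - w * b) * a = b * v + z := by
    rw [sub_mul, hxy, hyw]; ring
  rw [this]
  exact add_mem (Ideal.mul_mem_left _ _ hv) hz

theorem NZD.pow_ins {A : Type*} [CommRing A] {S : Set A} {a b : A} (h : NZD (Ideal.span S) a)
    (hb : NZD (Ideal.span (insert a S)) b) (e : ℕ) : NZD (Ideal.span (insert (a ^ e) S)) b := by
  induction e with
  | zero =>
    intro x _
    have : Ideal.span (insert (a ^ 0) S) = ⊤ := by
      rw [Ideal.eq_top_iff_one]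
      apply Ideal.subset_span
      simp
    rw [this]; trivial
  | succ e ih =>
    intro x hx
    obtain ⟨y, z, hz, hxy⟩ := Ideal.mem_span_insert.1 hx
    have h1 : x ∈ Ideal.span (insert a S) := by
      apply hb
      rw [Ideal.mem_span_insert]
      exact ⟨y * a ^ e, z, hz, by rw [hxy]; ring⟩
    obtain ⟨w, v, hv, hxw⟩ := Ideal.mem_span_insert.1 h1
    have h2 : w * b - y * a ^ e ∈ Ideal.span S := by
      apply h
      have : (w * b - y * a ^ e) * a = z - b * v := by
        rw [hxw] at hxy
        linear_combination hxy
      rw [this]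
      exact sub_mem hz (Ideal.mul_mem_left _ _ hv)
    have h3 : w ∈ Ideal.span (insert (a ^ e) S) := by
      apply ih
      rw [Ideal.mem_span_insert]
      exact ⟨y, _, h2, by ring⟩
    obtain ⟨u, q, hq, hw⟩ := Ideal.mem_span_insert.1 h3
    rw [Ideal.mem_span_insert]
    exact ⟨u, a * q + v, add_mem (Ideal.mul_mem_left _ _ hq) hv, by rw [hxw, hw]; ring⟩

theorem WkReg.move {A : Type*} [CommRing A] {n : ℕ} {a : Fin n → A} (ha : WkReg a) (t : Fin n)
    (m : ℕ) (hm : (t : ℕ) + 1 ≤ m) (hmn : m ≤ n) :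
    NZD (Ideal.span (a '' {j | (j : ℕ) < m ∧ j ≠ t})) (a t) := by
  induction m, hm using Nat.le_induction with
  | base =>
    have : {j : Fin n | (j : ℕ) < t + 1 ∧ j ≠ t} = {j | j < t} := by
      ext j; simp only [Set.mem_ofPred_eq, Fin.lt_def, ne_eq, Fin.ext_iff]; omega
    rw [this]
    exact ha t
  | succ m hm ih =>
    have ih := ih (by omega)
    have e1 : {j : Fin n | (j : ℕ) < m + 1 ∧ j ≠ t}
        = insert ⟨m, by omega⟩ {j : Fin n | (j : ℕ) < m ∧ j ≠ t} := by
      ext j; simp only [Set.mem_ofPred_eq, Set.mem_insert_iff, ne_eq, Fin.ext_iff]; omega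
    rw [e1, Set.image_insert_eq]
    apply ih.swap
    rw [← Set.image_insert_eq]
    have e2 : insert t {j : Fin n | (j : ℕ) < m ∧ j ≠ t}
        = {j | j < (⟨m, by omega⟩ : Fin n)} := by
      ext j; simp only [Set.mem_ofPred_eq, Set.mem_insert_iff, ne_eq, Fin.ext_iff, Fin.lt_def]; omega
    rw [e2]
    exact ha _

theorem WkReg.update {A : Type*} [CommRing A] {n : ℕ} {a : Fin n → A} (ha : WkReg a) (s : Fin n)
    (e : ℕ) : WkReg (Function.update a s (a s ^ e)) := by
  have himg : ∀ S : Set (Fin n), s ∉ S → Function.update a s (a s ^ e) '' S = a '' S := by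
    intro S hS
    apply Set.image_congr
    intro j hj
    rw [Function.update_of_ne]
    rintro rfl; exact hS hj
  intro j
  rcases le_or_gt j s with h | h
  · rw [himg _ (by simpa using h)]
    by_cases hjs : j = s
    · subst hjs
      rw [Function.update_self]
      exact NZD.pow (ha j) e
    · rw [Function.update_of_ne hjs]
      exact ha j
  · rw [Function.update_of_ne h.ne']
    have e2 : {i : Fin n | i < j} = insert s {i : Fin n | (i : ℕ) < j ∧ i ≠ s} := by
      ext i; simp only [Set.mem_ofPred_eq, Set.mem_insert_iff, ne_eq, Fin.ext_iff, Fin.lt_def] at h ⊢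
      omega
    rw [e2, Set.image_insert_eq, himg _ (by simp), Function.update_self]
    apply NZD.pow_ins (ha.move s j (by simpa using h) (by omega))
    rw [← Set.image_insert_eq, ← e2]
    exact ha j

/-- first `t` entries raised to the `p`-th power -/
def cseq {A : Type*} [CommRing A] {n : ℕ} (a : Fin n → A) (p t : ℕ) : Fin n → A :=
  fun i => if (i : ℕ) < t then a i ^ p else a i

theorem cseq_succ {A : Type*} [CommRing A] {n : ℕ} (a : Fin n → A) (p t : ℕ) (ht : t < n) :
    cseq a p (t + 1) = Function.update (cseq a p t) ⟨t, ht⟩ (cseq a p t ⟨t, ht⟩ ^ p) := by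
  ext i
  by_cases h : i = ⟨t, ht⟩
  · subst h; simp [cseq]
  · rw [Function.update_of_ne h]
    have : (i : ℕ) ≠ t := fun h' => h (Fin.ext h')
    have : (i : ℕ) < t + 1 ↔ (i : ℕ) < t := by omega
    simp [cseq, this]

theorem WkReg.cseq {A : Type*} [CommRing A] {n : ℕ} {a : Fin n → A} (ha : WkReg a) (p t : ℕ)
    (ht : t ≤ n) : WkReg (cseq a p t) := by
  induction t with
  | zero =>
    have : _root_.cseq a p 0 = a := by ext i; simp [_root_.cseq]
    rwa [this]
  | succ t ih =>
    rw [cseq_succ a p t ht]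
    exact (ih (by omega)).update _ _

theorem WkReg.descent {A : Type*} [CommRing A] {n : ℕ} {a : Fin n → A} (ha : WkReg a) (p : ℕ)
    (hp : 0 < p) (x : A) (t : ℕ)
    (ht : t ≤ n)
    (hx : x * ∏ i ∈ Finset.univ.filter (fun i : Fin n => (i : ℕ) < t), a i ^ (p - 1) ∈
      Ideal.span (Set.range (_root_.cseq a p t))) :
    x ∈ Ideal.span (Set.range a) := by
  induction t with
  | zero =>
    have : _root_.cseq a p 0 = a := by ext i; simp [_root_.cseq]
    rw [this] at hx
    simpa using hx
  | succ t ih =>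
    apply ih (by omega)
    set s : Fin n := ⟨t, ht⟩ with hs
    have e1 : (Finset.univ.filter fun i : Fin n => (i : ℕ) < t + 1)
        = insert s (Finset.univ.filter fun i : Fin n => (i : ℕ) < t) := by
      ext j
      simp only [Finset.mem_filter, Finset.mem_univ, true_and, Finset.mem_insert, Fin.ext_iff, hs]
      omega
    rw [e1, Finset.prod_insert (by simp [hs])] at hx
    have hcs : _root_.cseq a p t s = a s := by simp [_root_.cseq, hs]
    have hN := (ha.cseq p t (by omega)).move s n (by simp [hs]; omega) le_rfl
    rw [hcs] at hN
    have e2 : (Set.univ : Set (Fin n)) = insert s {j : Fin n | (j : ℕ) < n ∧ j ≠ s} := by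
      ext j; simp; tauto
    have e3 : Set.range (_root_.cseq a p t)
        = insert (a s) (_root_.cseq a p t '' {j : Fin n | (j : ℕ) < n ∧ j ≠ s}) := by
      rw [← Set.image_univ, e2, Set.image_insert_eq, hcs]
    have e4 : Set.range (_root_.cseq a p (t + 1))
        = insert (a s ^ p) (_root_.cseq a p t '' {j : Fin n | (j : ℕ) < n ∧ j ≠ s}) := by
      rw [← Set.image_univ, e2, Set.image_insert_eq, cseq_succ a p t ht, Function.update_self, hcs]
      congr 1
      apply Set.image_congr
      intro j hj
      rw [Function.update_of_ne hj.2]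
    rw [e4] at hx
    rw [e3]
    obtain ⟨y, z, hz, hxy⟩ := Ideal.mem_span_insert.1 hx
    rw [Ideal.mem_span_insert]
    refine ⟨y, _, hN.pow (p - 1) (x * (∏ i ∈ Finset.univ.filter (fun i : Fin n => (i : ℕ) < t), a i ^ (p - 1)) - y * a s) ?_,
      by ring⟩
    have hpp : a s ^ p = a s * a s ^ (p - 1) := by
      rw [← pow_succ', Nat.sub_add_cancel hp]
    rw [hpp] at hxy
    convert hz using 1
    linear_combination hxy

section ops
open MvPolynomial

/-- pderiv as an endomorphism -/
noncomputable def dE {A : Type*} [CommRing A] {n : ℕ} (i : Fin n) :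
    Module.End A (MvPolynomial (Fin n) A) := (pderiv i).toLinearMap

/-- multiplication by a scalar -/
noncomputable def sE {A : Type*} [CommRing A] (n : ℕ) (c : A) :
    Module.End A (MvPolynomial (Fin n) A) := algebraMap A _ c

/-- The operator `Σ ∂ᵢ^j aᵢ^{p-1-j}`. -/
noncomputable def phi {A : Type*} [CommRing A] {n : ℕ} (a : Fin n → A) (p : ℕ) (i : Fin n) :
    Module.End A (MvPolynomial (Fin n) A) :=
  ∑ j ∈ Finset.range p, dE i ^ j * sE n (a i) ^ (p - 1 - j)

variable {A : Type*} [CommRing A] {n : ℕ} (a : Fin n → A) (p : ℕ)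

theorem sE_comm (c : A) (T : Module.End A (MvPolynomial (Fin n) A)) : Commute T (sE n c) :=
  (Algebra.commutes c T).symm

theorem sE_apply (c : A) (h : MvPolynomial (Fin n) A) : sE n c h = C c * h := by
  rw [sE, Module.algebraMap_end_apply, smul_eq_C_mul]

theorem dE_comm (i j : Fin n) : Commute (dE (A := A) i) (dE j) := by
  have h : ⁅(pderiv i : Derivation A (MvPolynomial (Fin n) A) (MvPolynomial (Fin n) A)),
      (pderiv j : Derivation A (MvPolynomial (Fin n) A) (MvPolynomial (Fin n) A))⁆ = 0 := by
    apply MvPolynomial.derivation_ext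
    intro k
    rw [Derivation.commutator_apply]
    simp [pderiv_X, Pi.single_apply, apply_ite]
  refine LinearMap.ext fun f => ?_
  have := congrArg (fun D => D f) h
  simp only [Derivation.commutator_apply, Derivation.zero_apply] at this
  exact sub_eq_zero.1 this

theorem phi_comm_dE (i j : Fin n) : Commute (phi a p i) (dE j) := by
  apply Commute.sum_left
  intro k _
  exact ((dE_comm i j).pow_left k).mul_left ((sE_comm _ _).symm.pow_left _)

theorem dE_pow_monomial (i : Fin n) (k : ℕ) (s : Fin n →₀ ℕ) (c : A) :
    (dE i ^ k) (monomial s c)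
      = monomial (s - Finsupp.single i k) (c * ((s i).descFactorial k : ℕ)) := by
  induction k with
  | zero => simp
  | succ k ih =>
    rw [pow_succ', Module.End.mul_apply, ih]
    change pderiv i _ = _
    rw [pderiv_monomial, Nat.descFactorial_succ, tsub_tsub, ← Finsupp.single_add]
    congr 1
    simp only [Finsupp.coe_tsub, Pi.sub_apply, Finsupp.single_eq_same]
    push_cast
    ring

theorem dE_pow_p (hp : p.Prime) [CharP A p] (i : Fin n) : dE (A := A) i ^ p = 0 := by
  refine MvPolynomial.linearMap_ext fun s => LinearMap.ext fun c => ?_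
  have : ((s i).descFactorial p : A) = 0 := by
    rw [CharP.cast_eq_zero_iff A p]
    exact (Nat.dvd_factorial hp.pos le_rfl).trans (Nat.factorial_dvd_descFactorial _ _)
  simp [dE_pow_monomial, this]

theorem D_phi (hp : p.Prime) [CharP A p] (i : Fin n) :
    (dE i - sE n (a i)) * phi a p i = - sE n (a i) ^ p := by
  rw [phi, (sE_comm (a i) (dE i)).mul_geom_sum₂, dE_pow_p p hp, zero_sub]

theorem phi_D (hp : p.Prime) [CharP A p] (i : Fin n) :
    phi a p i * (dE i - sE n (a i)) = - sE n (a i) ^ p := by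
  rw [← D_phi a p hp]
  exact ((phi_comm_dE a p i i).sub_right (sE_comm _ _))

theorem sE_pow (c : A) (k : ℕ) : sE n c ^ k = sE n (c ^ k) := by
  simp [sE]

theorem phi_const (hp : 0 < p) (i : Fin n) (h : MvPolynomial (Fin n) A) (hh : pderiv i h = 0) :
    phi a p i h = C (a i ^ (p - 1)) * h := by
  rw [phi, LinearMap.sum_apply, Finset.sum_eq_single 0]
  · simp [sE_pow, sE_apply]
  · intro j _ hj
    obtain ⟨j, rfl⟩ := Nat.exists_eq_succ_of_ne_zero hj
    rw [((sE_comm _ _).pow_right _).eq, Module.End.mul_apply, pow_succ, Module.End.mul_apply]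
    have : dE i h = 0 := hh
    simp [this]
  · intro h0; simp at h0; omega

theorem mixed (hp : p.Prime) [CharP A p] (h : MvPolynomial (Fin n) A)
    (hh : ∀ i, pderiv i h = 0) (hI : h ∈ ImD a) (s : Finset (Fin n)) :
    ∃ g : Fin n → MvPolynomial (Fin n) A,
      C (∏ i ∈ s, a i ^ (p - 1)) * h
        = ∑ i, if i ∈ s then C (a i ^ p) * g i else (dE i - sE n (a i) : Module.End A (MvPolynomial (Fin n) A)) (g i) := by
  induction s using Finset.induction_on with
  | empty =>
    obtain ⟨g, hg⟩ := hI
    refine ⟨g, ?_⟩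
    simp [LinearMap.sub_apply, sE_apply, dE, ← hg]
  | insert j s hj ih =>
    obtain ⟨g, hg⟩ := ih
    refine ⟨fun i => if i = j then - g i else phi a p j (g i), ?_⟩
    have h1 := congrArg (phi a p j) hg
    rw [phi_const a p hp.pos j _ (by rw [pderiv_C_mul, hh, mul_zero]), ← mul_assoc, ← C_mul,
      map_sum] at h1
    rw [Finset.prod_insert hj, h1]
    apply Finset.sum_congr rfl
    intro i _
    by_cases hij : i = j
    · subst hij
      simp only [hj, if_false, Finset.mem_insert_self, if_true]
      rw [← Module.End.mul_apply, phi_D a p hp, sE_pow, LinearMap.neg_apply, sE_apply, mul_neg]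
    · by_cases his : i ∈ s
      · simp only [his, if_true, Finset.mem_insert, hij, or_true, if_false]
        rw [← smul_eq_C_mul, map_smul, smul_eq_C_mul]
      · simp only [his, Finset.mem_insert, hij, or_false, if_false]
        rw [← Module.End.mul_apply, ← Module.End.mul_apply,
          ((phi_comm_dE a p j i).sub_right (sE_comm _ _)).eq]

end ops

/-- In characteristic `p > 0`, if `f^p ∈ ImD` then `g·f^m ∈ ImD` for every polynomial `g`
and every `m ≥ p²`. -/
theorem stmt_18 {k A : Type*} [Field k] [CommRing A] [Algebra k A]
    (p : ℕ) (hp : p.Prime) [CharP k p] {n : ℕ} (a : Fin n → A) (ha : IsRegSeq a)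
    (f : MvPolynomial (Fin n) A) (hf : f ^ p ∈ ImD a) :
    ∀ g : MvPolynomial (Fin n) A, ∀ m : ℕ, p ^ 2 ≤ m → g * f ^ m ∈ ImD a := by
  have hnt : Nontrivial A := by
    by_contra h
    rw [not_nontrivial_iff_subsingleton] at h
    exact ha.2 (Subsingleton.elim _ _)
  have : CharP A p := charP_of_injective_algebraMap (algebraMap k A).injective p
  have := Fact.mk hp
  have hw : WkReg a := ha.1
  obtain ⟨u, hu⟩ := mixed a p hp (f ^ p) (fun i => by
    rw [Derivation.leibniz_pow]
    rw [← Nat.cast_smul_eq_nsmul A, CharP.cast_eq_zero, zero_smul]) hf Finset.univ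
  simp only [Finset.mem_univ, if_true] at hu
  have hmem : f ^ p ∈ Ideal.span (Set.range fun i => (MvPolynomial.C (a i) : MvPolynomial (Fin n) A)) := by
    have : f ^ p ∈ Ideal.map MvPolynomial.C (Ideal.span (Set.range a)) := by
      rw [MvPolynomial.mem_map_C_iff]
      intro d
      apply hw.descent p hp.pos _ n le_rfl
      have h1 := congrArg (MvPolynomial.coeff d) hu
      rw [MvPolynomial.coeff_C_mul, MvPolynomial.coeff_sum] at h1
      have h2 : (Finset.univ.filter fun i : Fin n => (i : ℕ) < n) = Finset.univ := by
        ext j; simp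
      rw [h2, mul_comm, h1]
      apply sum_mem
      intro i _
      rw [MvPolynomial.coeff_C_mul]
      apply Ideal.mul_mem_right
      apply Ideal.subset_span
      exact ⟨i, by simp [cseq]⟩
    rw [Ideal.map_span, ← Set.range_comp] at this
    exact this
  obtain ⟨c, hc⟩ := Ideal.mem_span_range_iff_exists_fun.1 hmem
  intro g m hm
  have hfm : f ^ m = f ^ (m - p ^ 2) * ∑ i, c i ^ p * MvPolynomial.C (a i) ^ p := by
    have : f ^ m = f ^ (m - p ^ 2) * (f ^ p) ^ p := by
      rw [← pow_mul, ← pow_add, ← pow_two, Nat.sub_add_cancel hm]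
    rw [this, ← hc, sum_pow_char p]
    simp [mul_pow]
  refine ⟨fun i => phi a p i (-(g * f ^ (m - p ^ 2) * c i ^ p)), ?_⟩
  rw [hfm, ← mul_assoc, Finset.mul_sum]
  apply Finset.sum_congr rfl
  intro i _
  have h1 := congrArg (fun T => T (-(g * f ^ (m - p ^ 2) * c i ^ p))) (D_phi a p hp i)
  simp only [Module.End.mul_apply, LinearMap.sub_apply, LinearMap.neg_apply, sE_pow, sE_apply] at h1
  change _ = dE i _ - _
  rw [h1, map_pow]
  ring
end
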